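/- arXiv:2107.14126 — 2 statements merged into one kernel-verified Lean document; each statement's English description precedes it below -/
import Mathlib

section
/- If a graph G has a growth schedule (with edge-activation distance d = 2) of k slots, then k ≥ ω(G) − 1, where ω(G) is the clique number of G: any clique of G contains at most one vertex generated in each slot, plus possibly the initiator. -/
/-!
A slot only ever adds edges between a vertex generated in that slot and a vertex that was already
present, so two vertices generated in the same slot are never adjacent, at any later time. Hence
`born` is injective on every clique; as its values lie in `{0, …, k}`, a clique has at most
`k + 1` vertices.
-/

open SimpleGraph

/-- A growth schedule of `k` slots for target graph `G`, with edge-activation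
distance `d`.  `born v` is the slot in which `v` is generated (the initiator has
`born = 0`), `parent v` is the vertex for which `v` was generated, `graph t` is
the graph grown at the end of slot `t` (after edge deletions) and `mid t` is the
intermediate graph of slot `t` after vertex generations and edge activations but
before edge deletions. -/
structure GrowthSchedule {V : Type*} [Fintype V] [DecidableEq V]
    (G : SimpleGraph V) (d : ℕ) (k : ℕ) where
  born : V → ℕ
  parent : V → V
  graph : ℕ → SimpleGraph V
  mid : ℕ → SimpleGraph V
  born_le : ∀ v, born v ≤ k
  init_unique : ∃! v, born v = 0
  parent_born : ∀ v, born v ≠ 0 → born (parent v) < born v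
  parent_inj : ∀ v w, born v ≠ 0 → born v = born w → parent v = parent w → v = w
  graph_zero : graph 0 = ⊥
  graph_final : graph k = G
  keep_le_mid : ∀ t, graph t ≤ mid (t + 1)
  parent_edge : ∀ v, born v ≠ 0 → (mid (born v)).Adj v (parent v)
  new_edges : ∀ t v w, (mid (t + 1)).Adj v w → ¬ (graph t).Adj v w →
    (born v = t + 1 ∧ born w ≤ t ∧
      (w = parent v ∨ ((graph t).Reachable (parent v) w ∧
        (graph t).dist (parent v) w ≤ d - 1))) ∨
    (born w = t + 1 ∧ born v ≤ t ∧
      (v = parent w ∨ ((graph t).Reachable (parent w) v ∧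
        (graph t).dist (parent w) v ≤ d - 1)))
  graph_le_mid : ∀ t, graph (t + 1) ≤ mid (t + 1)
  connected : ∀ t v w, born v ≤ t → born w ≤ t → (graph t).Reachable v w

/-- The total number of excess (i.e. deleted) edges of a growth schedule. -/
noncomputable def GrowthSchedule.excess {V : Type*} [Fintype V] [DecidableEq V]
    {G : SimpleGraph V} {d k : ℕ} (S : GrowthSchedule G d k) : ℕ :=
  ∑ t ∈ Finset.range k, ((S.mid (t + 1)).edgeSet \ (S.graph (t + 1)).edgeSet).ncard

/-- The star graph on `n` vertices: vertex `0` is the center, adjacent to all others. -/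
def starGraph (n : ℕ) : SimpleGraph (Fin n) :=
  SimpleGraph.fromRel (fun u _ => u.val = 0)

/-- Vertices with the same birth slot are non-adjacent in every graph of the schedule: an edge
between them can be neither inherited from an earlier graph nor newly activated. -/
lemma GrowthSchedule.born_ne_of_adj {V : Type*} [Fintype V] [DecidableEq V]
    {G : SimpleGraph V} {d k : ℕ} (S : GrowthSchedule G d k) (t : ℕ) {v w : V}
    (h : (S.graph t).Adj v w) : S.born v ≠ S.born w := by
  induction t with
  | zero => simp [S.graph_zero] at h
  | succ t ih =>
    by_cases h' : (S.graph t).Adj v w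
    · exact ih h'
    · rcases S.new_edges t v w (S.graph_le_mid t h) h' with ⟨h1, h2, -⟩ | ⟨h1, h2, -⟩ <;> omega

/-- If a graph `G` has a growth schedule (with `d = 2`) of `k`
slots, then `k ≥ ω(G) - 1`, i.e. `ω(G) ≤ k + 1`. -/
theorem slots_ge_clique_number {V : Type*} [Fintype V] [DecidableEq V]
    {G : SimpleGraph V} {k : ℕ} (S : GrowthSchedule G 2 k) :
    G.cliqueNum ≤ k + 1 := by
  obtain ⟨s, hs⟩ := G.exists_isNClique_cliqueNum
  rw [← hs.card_eq, ← Finset.card_range (k + 1)]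
  refine Finset.card_le_card_of_injOn S.born
    (fun v _ => by simpa [Nat.lt_succ_iff] using S.born_le v) fun v hv w hw hvw => ?_
  by_contra hne
  have hadj : (S.graph k).Adj v w := by
    rw [S.graph_final]
    exact hs.isClique hv hw hne
  exact S.born_ne_of_adj k hadj hvw
end

section
/- A connected graph G on n vertices has a growth schedule (with edge-activation distance d = 2) of n − 1 slots and zero excess edges if and only if G has a candidate elimination ordering. -/
/-!
With no deletions the graphs of a schedule increase, and every edge enters in the slot in which its
later endpoint is generated. Hence the neighbors of `v` in `G` generated no later than `v` lie in
the closed neighborhood of the parent of `v`: listing the vertices by decreasing birth slot, each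
vertex is a candidate, dominated by its parent (`GrowthSchedule.adj_parent`).

Conversely, read an elimination ordering backwards, one vertex per slot, choosing a dominating
vertex as the parent. The graph after slot `t` is `G` restricted to the vertices born by then
(`upTo`). Domination says exactly that all required edges end in the closed neighborhood of the
parent, so nothing ever has to be deleted.
-/

open SimpleGraph

/-- `v` is a candidate vertex of the subgraph of `H` induced by the set `s`:
some other vertex `w` of `s` satisfies `N[v] ⊆ N[w]` within `s`. -/
def CandidateIn {V : Type*} (H : SimpleGraph V) (s : Set V) (v : V) : Prop :=
  ∃ w ∈ s, w ≠ v ∧ ∀ x ∈ s, (x = v ∨ H.Adj v x) → (x = w ∨ H.Adj w x)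

/-- `H` has a candidate elimination ordering `v₁, …, vₙ` of its vertices: each
`vᵢ` (with `i ≤ n - 1`) is a candidate vertex of the subgraph induced by
`{vᵢ, …, vₙ}`. -/
def HasCEO {V : Type*} [Fintype V] (H : SimpleGraph V) : Prop :=
  ∃ e : Fin (Fintype.card V) ≃ V, ∀ i : Fin (Fintype.card V),
    (i : ℕ) < Fintype.card V - 1 →
    CandidateIn H {x | ∃ j, i ≤ j ∧ e j = x} (e i)

namespace GrowthSchedule

variable {V : Type*} [Fintype V] [DecidableEq V] {G : SimpleGraph V} {k : ℕ}

lemma mid_eq_of_excess (S : GrowthSchedule G 2 k) (h : S.excess = 0) {t : ℕ} (ht : t < k) :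
    S.mid (t + 1) = S.graph (t + 1) := by
  have h0 := (Finset.sum_eq_zero_iff.1 h) t (Finset.mem_range.2 ht)
  rw [Set.ncard_eq_zero (Set.toFinite _), Set.sdiff_eq_empty] at h0
  exact le_antisymm (SimpleGraph.edgeSet_subset_edgeSet.1 h0) (S.graph_le_mid t)

lemma graph_le_target (S : GrowthSchedule G 2 k) (h : S.excess = 0) {t : ℕ} (ht : t ≤ k) :
    S.graph t ≤ G := by
  induction ht using Nat.decreasingInduction with
  | self => exact S.graph_final.le
  | of_succ t ht ih =>
    exact (S.keep_le_mid t).trans ((S.mid_eq_of_excess h ht).le.trans ih)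

/-- Each edge of a zero-excess schedule joins its later endpoint to a vertex in the closed
neighborhood of the parent of that endpoint. -/
lemma adj_graph (S : GrowthSchedule G 2 k) (h : S.excess = 0) (t : ℕ) (ht : t ≤ k) {v x : V}
    (hvx : (S.graph t).Adj v x) (hb : S.born x ≤ S.born v) :
    x = S.parent v ∨ G.Adj (S.parent v) x := by
  induction t with
  | zero => simp [S.graph_zero] at hvx
  | succ t ih =>
    by_cases hold : (S.graph t).Adj v x
    · exact ih (by omega) hold
    · rcases S.new_edges t v x (S.graph_le_mid t hvx) hold with ⟨_, _, h3⟩ | ⟨h1, h2, _⟩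
      · rcases h3 with h3 | ⟨hr, hd⟩
        · exact Or.inl h3
        · have hd' : (S.graph t).dist (S.parent v) x = 0 ∨
              (S.graph t).dist (S.parent v) x = 1 := by omega
          rcases hd' with hd | hd
          · exact Or.inl (hr.dist_eq_zero_iff.1 hd).symm
          · exact Or.inr (S.graph_le_target h (by omega) (SimpleGraph.dist_eq_one_iff_adj.1 hd))
      · omega

lemma adj_parent (S : GrowthSchedule G 2 k) (h : S.excess = 0) {v : V} (hv : S.born v ≠ 0)
    {x : V} (hx : x = v ∨ G.Adj v x) (hb : S.born x ≤ S.born v) :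
    x = S.parent v ∨ G.Adj (S.parent v) x := by
  rcases hx with rfl | hx
  · obtain ⟨t, ht⟩ := Nat.exists_eq_succ_of_ne_zero hv
    have hk := S.born_le x
    have h1 := S.parent_edge x hv
    rw [ht, Nat.succ_eq_add_one, S.mid_eq_of_excess h (by omega)] at h1
    exact Or.inr (S.graph_le_target h (by omega) h1).symm
  · exact S.adj_graph h k le_rfl (by rwa [S.graph_final]) hb

lemma hasCEO (S : GrowthSchedule G 2 k) (h : S.excess = 0) : HasCEO G := by
  let e₀ := (Fintype.equivFin V).symm
  let f : Fin (Fintype.card V) → ℕᵒᵈ := fun i => OrderDual.toDual (S.born (e₀ i))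
  let e : Fin (Fintype.card V) ≃ V := (Tuple.sort f).trans e₀
  have hmono : ∀ i j, i ≤ j → S.born (e j) ≤ S.born (e i) := fun i j hij =>
    Tuple.monotone_sort f hij
  refine ⟨e, fun i hi => ?_⟩
  -- Some vertex follows `e i`, so uniqueness of the initiator forces `e i` to have a parent.
  have hne : S.born (e i) ≠ 0 := by
    intro h0
    let j : Fin (Fintype.card V) := ⟨i + 1, by omega⟩
    have hj := hmono i j (Fin.le_def.2 (Nat.le_succ _))
    have hij := e.injective (S.init_unique.unique h0 (by omega : S.born (e j) = 0))
    have := congrArg Fin.val hij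
    simp [j] at this
  have hpb := S.parent_born _ hne
  refine ⟨S.parent (e i), ⟨e.symm (S.parent (e i)), ?_, e.apply_symm_apply _⟩, ?_, ?_⟩
  · by_contra! hlt
    have := hmono _ _ hlt.le
    rw [e.apply_symm_apply] at this
    omega
  · intro heq
    rw [heq] at hpb
    omega
  · rintro x ⟨j, hij, rfl⟩ hx
    exact S.adj_parent h hne hx (hmono i j hij)

end GrowthSchedule

/-- The graph on `V` keeping the edges of `G` whose two endpoints have birth slot at most `t`;
later vertices stay as isolated vertices. -/
def upTo {V : Type*} (G : SimpleGraph V) (b : V → ℕ) (t : ℕ) : SimpleGraph V where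
  Adj v w := G.Adj v w ∧ b v ≤ t ∧ b w ≤ t
  symm := ⟨fun _ _ h => ⟨h.1.symm, h.2.2, h.2.1⟩⟩
  loopless := ⟨fun _ h => G.loopless.irrefl _ h.1⟩

/-- One vertex per slot, each dominated by an earlier vertex `p v` in the graph grown so far:
this is a schedule without excess edges. -/
lemma exists_schedule {V : Type*} [Fintype V] [DecidableEq V] (G : SimpleGraph V) (k : ℕ)
    (b : V → ℕ) (p : V → V) (hinj : Function.Injective b) (hk : ∀ v, b v ≤ k)
    (h0 : ∃ v, b v = 0) (hp : ∀ v, b v ≠ 0 → b (p v) < b v)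
    (hdom : ∀ v, b v ≠ 0 → ∀ x, b x ≤ b v → (x = v ∨ G.Adj v x) → (x = p v ∨ G.Adj (p v) x)) :
    ∃ S : GrowthSchedule G 2 k, S.excess = 0 := by
  have hadj : ∀ v, b v ≠ 0 → G.Adj v (p v) := by
    intro v hv
    rcases hdom v hv v le_rfl (Or.inl rfl) with h | h
    · have := hp v hv
      rw [← h] at this
      omega
    · exact h.symm
  have hmono : ∀ t, upTo G b t ≤ upTo G b (t + 1) := fun t v w h =>
    ⟨h.1, by have := h.2.1; omega, by have := h.2.2; omega⟩
  obtain ⟨r, hr⟩ := h0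
  have hreach : ∀ t m v, b v = m → m ≤ t → (upTo G b t).Reachable v r := by
    intro t m
    induction m using Nat.strong_induction_on with
    | _ m ih =>
      intro v hv hm
      by_cases hz : b v = 0
      · rw [hinj (hz.trans hr.symm)]
      · have hlt := hp v hz
        have ha : (upTo G b t).Adj v (p v) := ⟨hadj v hz, by omega, by omega⟩
        exact ha.reachable.trans (ih (b (p v)) (by omega) (p v) rfl (by omega))
  have hnew : ∀ t v w, G.Adj v w → b v = t + 1 → b w ≤ t →
      (w = p v ∨ ((upTo G b t).Reachable (p v) w ∧ (upTo G b t).dist (p v) w ≤ 2 - 1)) := by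
    intro t v w hvw hv hw
    have hne : b v ≠ 0 := by omega
    have hlt := hp v hne
    rcases hdom v hne w (by omega) (Or.inr hvw) with h | h
    · exact Or.inl h
    · have ha : (upTo G b t).Adj (p v) w := ⟨h, by omega, hw⟩
      exact Or.inr ⟨ha.reachable, (SimpleGraph.dist_eq_one_iff_adj.2 ha).le⟩
  refine ⟨{
    born := b
    parent := p
    graph := upTo G b
    mid := upTo G b
    born_le := hk
    init_unique := ⟨r, hr, fun v hv => hinj (Eq.trans hv hr.symm)⟩
    parent_born := hp
    parent_inj := fun v w _ h _ => hinj h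
    graph_zero := ?_
    graph_final := ?_
    keep_le_mid := hmono
    parent_edge := fun v hv => ⟨hadj v hv, le_rfl, (hp v hv).le⟩
    new_edges := ?_
    graph_le_mid := fun _ => le_rfl
    connected := fun t v w hv hw => (hreach t _ v rfl hv).trans (hreach t _ w rfl hw).symm }, ?_⟩
  · ext v w
    simp only [SimpleGraph.bot_adj, iff_false]
    rintro ⟨h, hv, hw⟩
    exact h.ne (hinj (by omega))
  · ext v w
    exact ⟨fun h => h.1, fun h => ⟨h, hk v, hk w⟩⟩
  · rintro t v w ⟨h, hv, hw⟩ hn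
    have hne : b v ≠ b w := fun hh => h.ne (hinj hh)
    have hn' : ¬ (b v ≤ t ∧ b w ≤ t) := fun hh => hn ⟨h, hh⟩
    by_cases hc : b v = t + 1
    · exact Or.inl ⟨hc, by omega, hnew t v w h hc (by omega)⟩
    · exact Or.inr ⟨by omega, by omega, hnew t w v h.symm (by omega) (by omega)⟩
  · simp [GrowthSchedule.excess]

/-- A connected graph `G` on `n` vertices has a growth schedule
(with `d = 2`) of `n - 1` slots and zero excess edges iff `G` has a candidate
elimination ordering. -/
theorem zero_excess_iff_ceo {V : Type*} [Fintype V] [DecidableEq V]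
    (G : SimpleGraph V) (hG : G.Connected) :
    (∃ S : GrowthSchedule G 2 (Fintype.card V - 1), S.excess = 0) ↔ HasCEO G := by
  refine ⟨fun ⟨S, h⟩ => S.hasCEO h, ?_⟩
  rintro ⟨e, he⟩
  have hpos : 0 < Fintype.card V := Fintype.card_pos_iff.2 hG.nonempty
  let b : V → ℕ := fun v => Fintype.card V - 1 - (e.symm v : ℕ)
  have hbdef : ∀ v, b v = Fintype.card V - 1 - (e.symm v : ℕ) := fun _ => rfl
  have hlt : ∀ v, (e.symm v : ℕ) < Fintype.card V := fun v => (e.symm v).2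
  have hex : ∀ v, ∃ w, b v ≠ 0 → b w < b v ∧
      ∀ x, b x ≤ b v → (x = v ∨ G.Adj v x) → (x = w ∨ G.Adj w x) := by
    intro v
    by_cases hv : b v = 0
    · exact ⟨v, fun h => absurd hv h⟩
    · obtain ⟨w, ⟨j, hj, rfl⟩, hne, hw⟩ := he (e.symm v) (by have := hbdef v; omega)
      rw [e.apply_symm_apply] at hne hw
      refine ⟨e j, fun _ => ⟨?_, fun x hx => hw x ⟨e.symm x, ?_, e.apply_symm_apply x⟩⟩⟩
      · have h1 : (e.symm v : ℕ) ≠ j := fun h => hne (by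
          rw [← Fin.ext h, e.apply_symm_apply])
        have h2 : (e.symm v : ℕ) ≤ j := hj
        have h3 := hbdef v
        have h4 := hbdef (e j)
        rw [e.symm_apply_apply] at h4
        omega
      · have h1 := hbdef v
        have h2 := hbdef x
        have h3 := hlt v
        have h4 := hlt x
        exact Fin.le_def.2 (by omega)
  choose p hp using hex
  refine exists_schedule G _ b p ?_ (fun v => Nat.sub_le _ _) ?_ (fun v hv => (hp v hv).1)
    (fun v hv => (hp v hv).2)
  · intro v w hvw
    have h1 := hbdef v
    have h2 := hbdef w
    have h3 := hlt v
    have h4 := hlt w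
    exact e.symm.injective (Fin.ext (by omega))
  · refine ⟨e ⟨Fintype.card V - 1, by omega⟩, ?_⟩
    rw [hbdef, e.symm_apply_apply]
    exact Nat.sub_self _
end
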